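/- arXiv:0812.0730 — 2 statements merged into one kernel-verified Lean document; each statement's English description precedes it below -/
import Mathlib

section
/- Let α > -1, 0 < t ≤ 2, a ≠ 0, and n ≥ 1. Define R_n(x) = L_n^α(x) + a·L_n^{α+t}(x). Then the zeros of R_n interlace with the zeros of L_n^α: between any two consecutive zeros of L_n^α there lies exactly one zero of R_n (in particular R_n changes sign between consecutive zeros of L_n^α). -/
open Finset

/-- Generalized Laguerre polynomial `L_n^α(x) = ∑_{k=0}^n (-1)^k C(n+α, n-k) x^k / k!`,
where `C(n+α, n-k) = (∏_{i=1}^{n-k} (α+k+i)) / (n-k)!`. -/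
noncomputable def laguerre (α : ℝ) (n : ℕ) (x : ℝ) : ℝ :=
  ∑ k ∈ Finset.range (n + 1),
    (-1 : ℝ) ^ k * (∏ i ∈ Finset.range (n - k), (α + k + 1 + i)) /
      ((Nat.factorial (n - k) : ℝ) * (Nat.factorial k : ℝ)) * x ^ k


/-- The rising factorial quotient `a (a + 1) ⋯ (a + m - 1) / m!`, i.e. the coefficient of `z ^ m`
in `(1 - z) ^ (-a)`. -/
noncomputable def risingCoeff (a : ℝ) (m : ℕ) : ℝ :=
  (∏ i ∈ Finset.range m, (a + i)) / (Nat.factorial m : ℝ)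

/-- The monomial `(-x) ^ k / k!`. -/
noncomputable def negExpTerm (x : ℝ) (k : ℕ) : ℝ := (-x) ^ k / (Nat.factorial k : ℝ)

theorem risingCoeff_zero (a : ℝ) : risingCoeff a 0 = 1 := by simp [risingCoeff]

theorem succ_mul_risingCoeff_succ (a : ℝ) (m : ℕ) :
    ((m : ℝ) + 1) * risingCoeff a (m + 1) = (a + m) * risingCoeff a m := by
  have : (Nat.factorial m : ℝ) ≠ 0 := by positivity
  simp only [risingCoeff, Finset.prod_range_succ, Nat.factorial_succ]
  push_cast
  field_simp

theorem succ_mul_risingCoeff_succ' (a : ℝ) (m : ℕ) :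
    ((m : ℝ) + 1) * risingCoeff a (m + 1) = a * risingCoeff (a + 1) m := by
  have : (Nat.factorial m : ℝ) ≠ 0 := by positivity
  simp only [risingCoeff, Finset.prod_range_succ', Nat.factorial_succ]
  push_cast
  field_simp
  simp only [add_zero, mul_comm a, add_assoc, add_comm (1 : ℝ)]

theorem risingCoeff_add_one_succ (a : ℝ) (m : ℕ) :
    risingCoeff (a + 1) (m + 1) = risingCoeff (a + 1) m + risingCoeff a (m + 1) := by
  have h1 := succ_mul_risingCoeff_succ (a + 1) m
  have h2 := succ_mul_risingCoeff_succ' a m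
  have : ((m : ℝ) + 1) ≠ 0 := by positivity
  apply mul_left_cancel₀ this
  linear_combination h1 - h2

theorem risingCoeff_pos {a : ℝ} (ha : 0 < a) (m : ℕ) : 0 < risingCoeff a m := by
  have : 0 < ∏ i ∈ Finset.range m, (a + (i : ℝ)) := Finset.prod_pos fun i _ => by positivity
  unfold risingCoeff
  positivity

/-- The Chu–Vandermonde identity. -/
theorem risingCoeff_add (a b : ℝ) (n : ℕ) :
    risingCoeff (a + b) n =
      ∑ p ∈ HasAntidiagonal.antidiagonal n, risingCoeff a p.1 * risingCoeff b p.2 := by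
  induction n with
  | zero => simp [risingCoeff_zero]
  | succ n ih =>
    have hn : ((n : ℝ) + 1) ≠ 0 := by positivity
    apply mul_left_cancel₀ hn
    have split : ((n : ℝ) + 1) *
        ∑ p ∈ HasAntidiagonal.antidiagonal (n + 1), risingCoeff a p.1 * risingCoeff b p.2 =
        ∑ p ∈ HasAntidiagonal.antidiagonal (n + 1),
          (p.1 : ℝ) * risingCoeff a p.1 * risingCoeff b p.2 +
        ∑ p ∈ HasAntidiagonal.antidiagonal (n + 1),
          risingCoeff a p.1 * ((p.2 : ℝ) * risingCoeff b p.2) := by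
      rw [Finset.mul_sum, ← Finset.sum_add_distrib]
      refine Finset.sum_congr rfl fun p hp => ?_
      have hp' : (p.1 : ℝ) + p.2 = n + 1 := by exact_mod_cast HasAntidiagonal.mem_antidiagonal.1 hp
      rw [← hp']
      ring
    rw [split, Finset.Nat.sum_antidiagonal_succ, Finset.Nat.sum_antidiagonal_succ',
      succ_mul_risingCoeff_succ, ih, Finset.mul_sum]
    simp only [Nat.cast_zero, zero_mul, mul_zero, zero_add, Nat.cast_add, Nat.cast_one]
    rw [← Finset.sum_add_distrib]
    refine Finset.sum_congr rfl fun p hp => ?_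
    have hp' : (p.1 : ℝ) + p.2 = n := by exact_mod_cast HasAntidiagonal.mem_antidiagonal.1 hp
    rw [succ_mul_risingCoeff_succ, succ_mul_risingCoeff_succ, ← hp']
    ring

theorem succ_mul_negExpTerm_succ (x : ℝ) (k : ℕ) :
    ((k : ℝ) + 1) * negExpTerm x (k + 1) = -x * negExpTerm x k := by
  have : (Nat.factorial k : ℝ) ≠ 0 := by positivity
  simp only [negExpTerm, Nat.factorial_succ, pow_succ]
  push_cast
  field_simp

theorem hasDerivAt_negExpTerm_succ (x : ℝ) (k : ℕ) :
    HasDerivAt (fun x => negExpTerm x (k + 1)) (-negExpTerm x k) x := by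
  have : (Nat.factorial k : ℝ) ≠ 0 := by positivity
  unfold negExpTerm
  refine (((hasDerivAt_id x).neg.pow (k + 1)).div_const (Nat.factorial (k + 1) : ℝ)).congr_deriv ?_
  rw [Nat.factorial_succ]
  push_cast
  simp
  field_simp

theorem laguerre_eq_sum_antidiagonal (α : ℝ) (n : ℕ) (x : ℝ) :
    laguerre α n x =
      ∑ p ∈ HasAntidiagonal.antidiagonal n, risingCoeff (α + p.2 + 1) p.1 * negExpTerm x p.2 := by
  rw [← Finset.Nat.sum_antidiagonal_swap, Finset.Nat.sum_antidiagonal_eq_sum_range_succ_mk]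
  refine Finset.sum_congr rfl fun k _ => ?_
  simp only [risingCoeff, negExpTerm, Prod.swap, neg_pow x]
  ring

theorem laguerre_zero (α x : ℝ) : laguerre α 0 x = 1 := by simp [laguerre]

theorem laguerre_add_one_succ (α : ℝ) (n : ℕ) (x : ℝ) :
    laguerre (α + 1) (n + 1) x = laguerre (α + 1) n x + laguerre α (n + 1) x := by
  simp only [laguerre_eq_sum_antidiagonal, Finset.Nat.sum_antidiagonal_succ, risingCoeff_zero]
  have h : ∀ p : ℕ × ℕ, risingCoeff (α + 1 + p.2 + 1) (p.1 + 1) =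
      risingCoeff (α + 1 + p.2 + 1) p.1 + risingCoeff (α + p.2 + 1) (p.1 + 1) := fun p => by
    rw [add_right_comm α 1, risingCoeff_add_one_succ]
  simp only [h, add_mul, Finset.sum_add_distrib]
  ring

theorem hasDerivAt_laguerre_succ (α : ℝ) (n : ℕ) (x : ℝ) :
    HasDerivAt (laguerre α (n + 1)) (-laguerre (α + 1) n x) x := by
  have e : laguerre α (n + 1) = fun x => risingCoeff (α + 0 + 1) (n + 1) * 1 +
      ∑ p ∈ HasAntidiagonal.antidiagonal n,
        risingCoeff (α + (p.2 + 1 : ℕ) + 1) p.1 * negExpTerm x (p.2 + 1) := by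
    funext x
    rw [laguerre_eq_sum_antidiagonal, Finset.Nat.sum_antidiagonal_succ']
    simp [negExpTerm]
  rw [e, laguerre_eq_sum_antidiagonal, ← Finset.sum_neg_distrib]
  refine HasDerivAt.const_add _ (HasDerivAt.fun_sum fun p _ => ?_)
  refine ((hasDerivAt_negExpTerm_succ x p.2).const_mul
    (risingCoeff (α + (p.2 + 1 : ℕ) + 1) p.1)).congr_deriv ?_
  push_cast
  rw [mul_neg, add_assoc α 1, add_comm (1 : ℝ)]

theorem mul_laguerre_add_one (α : ℝ) (n : ℕ) (x : ℝ) :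
    x * laguerre (α + 1) n x =
      (n + 1 + α) * laguerre α n x - (n + 1) * laguerre α (n + 1) x := by
  have h1 : x * laguerre (α + 1) n x =
      -∑ p ∈ HasAntidiagonal.antidiagonal (n + 1),
        (p.2 : ℝ) * (risingCoeff (α + p.2 + 1) p.1 * negExpTerm x p.2) := by
    rw [laguerre_eq_sum_antidiagonal, Finset.Nat.sum_antidiagonal_succ', Finset.mul_sum]
    simp only [Nat.cast_zero, zero_mul, zero_add, ← Finset.sum_neg_distrib]
    refine Finset.sum_congr rfl fun p _ => ?_
    have := succ_mul_negExpTerm_succ x p.2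
    push_cast
    rw [add_right_comm α 1, add_assoc α]
    linear_combination risingCoeff (α + (p.2 + 1) + 1) p.1 * this
  have h2 : (n + 1 + α) * laguerre α n x = ∑ p ∈ HasAntidiagonal.antidiagonal (n + 1),
        (p.1 : ℝ) * (risingCoeff (α + p.2 + 1) p.1 * negExpTerm x p.2) := by
    rw [laguerre_eq_sum_antidiagonal, Finset.Nat.sum_antidiagonal_succ, Finset.mul_sum]
    simp only [Nat.cast_zero, zero_mul, zero_add]
    refine Finset.sum_congr rfl fun p hp => ?_
    have hp' : (p.1 : ℝ) + p.2 = n := by exact_mod_cast HasAntidiagonal.mem_antidiagonal.1 hp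
    have := succ_mul_risingCoeff_succ (α + p.2 + 1) p.1
    push_cast
    rw [← hp']
    linear_combination (-negExpTerm x p.2) * this
  rw [h1, h2, laguerre_eq_sum_antidiagonal, Finset.mul_sum, ← Finset.sum_neg_distrib,
    ← Finset.sum_sub_distrib]
  refine Finset.sum_congr rfl fun p hp => ?_
  have hp' : (p.1 : ℝ) + p.2 = n + 1 := by exact_mod_cast HasAntidiagonal.mem_antidiagonal.1 hp
  rw [← hp']
  ring

theorem laguerre_recurrence (α : ℝ) (n : ℕ) (x : ℝ) :
    ((n : ℝ) + 2) * laguerre α (n + 2) x =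
      (2 * n + 3 + α - x) * laguerre α (n + 1) x - (n + 1 + α) * laguerre α n x := by
  have h1 := mul_laguerre_add_one α n x
  have h2 := mul_laguerre_add_one α (n + 1) x
  have h3 := laguerre_add_one_succ α n x
  push_cast at h2
  linear_combination h2 - h1 - x * h3

theorem laguerre_add_eq_sum (β t : ℝ) (n : ℕ) (x : ℝ) :
    laguerre (β + t) n x =
      ∑ p ∈ HasAntidiagonal.antidiagonal n, risingCoeff t p.1 * laguerre β p.2 x := by
  have h : ∀ p : ℕ × ℕ, risingCoeff (β + t + p.2 + 1) p.1 =
      ∑ q ∈ HasAntidiagonal.antidiagonal p.1,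
        risingCoeff t q.1 * risingCoeff (β + p.2 + 1) q.2 := fun p => by
    rw [← risingCoeff_add]
    ring_nf
  simp only [laguerre_eq_sum_antidiagonal, h, Finset.mul_sum, Finset.sum_mul, Finset.sum_sigma']
  refine Finset.sum_nbij' (fun a => ⟨(a.2.1, a.2.2 + a.1.2), (a.2.2, a.1.2)⟩)
    (fun a => ⟨(a.1.1 + a.2.1, a.2.2), (a.1.1, a.2.1)⟩) ?_ ?_ ?_ ?_ ?_
  · rintro ⟨⟨i, j⟩, ⟨k, l⟩⟩ hp
    simp only [Finset.mem_sigma, HasAntidiagonal.mem_antidiagonal] at hp ⊢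
    obtain ⟨rfl, rfl⟩ := hp
    exact ⟨(add_assoc k l j).symm, trivial⟩
  · rintro ⟨⟨i, j⟩, ⟨k, l⟩⟩ hp
    simp only [Finset.mem_sigma, HasAntidiagonal.mem_antidiagonal] at hp ⊢
    obtain ⟨rfl, rfl⟩ := hp
    exact ⟨add_assoc i k l, trivial⟩
  · rintro ⟨⟨i, j⟩, ⟨k, l⟩⟩ hp
    simp only [Finset.mem_sigma, HasAntidiagonal.mem_antidiagonal] at hp
    obtain ⟨rfl, rfl⟩ := hp
    rfl
  · rintro ⟨⟨i, j⟩, ⟨k, l⟩⟩ hp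
    simp only [Finset.mem_sigma, HasAntidiagonal.mem_antidiagonal] at hp
    obtain ⟨rfl, rfl⟩ := hp
    rfl
  · intro p _
    simp only [mul_assoc]

theorem laguerre_pos_of_nonpos {α : ℝ} (hα : -1 < α) (n : ℕ) {x : ℝ} (hx : x ≤ 0) :
    0 < laguerre α n x := by
  rw [laguerre_eq_sum_antidiagonal]
  have hpos : ∀ p : ℕ × ℕ, 0 < risingCoeff (α + p.2 + 1) p.1 := fun p =>
    risingCoeff_pos (by have : (0 : ℝ) ≤ p.2 := p.2.cast_nonneg; linarith) _
  refine Finset.sum_pos' (fun p _ => mul_nonneg (hpos p).le ?_) ⟨(n, 0), by simp, ?_⟩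
  · exact div_nonneg (pow_nonneg (by linarith) _) (by positivity)
  · simpa [negExpTerm] using hpos (n, 0)

theorem laguerre_succ_ne_zero {α : ℝ} (hα : -1 < α) (n : ℕ) {x : ℝ}
    (h : laguerre α (n + 1) x = 0) : laguerre α n x ≠ 0 := by
  induction n with
  | zero => simp [laguerre_zero]
  | succ n ih =>
    intro h0
    have hr := laguerre_recurrence α n x
    rw [h, h0] at hr
    refine ih h0 ?_
    have : (0 : ℝ) < n + 1 + α := by have : (0 : ℝ) ≤ n := n.cast_nonneg; linarith
    have h1 : (n + 1 + α) * laguerre α n x = 0 := by linarith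
    exact (mul_eq_zero.1 h1).resolve_left this.ne'

/-- The partial sum `∑_{k ≤ n} L_k^β(y) r^k` of the Laguerre generating function. -/
noncomputable def laguerrePartialSum (β : ℝ) (n : ℕ) (y r : ℝ) : ℝ :=
  ∑ k ∈ Finset.range (n + 1), laguerre β k y * r ^ k

theorem laguerrePartialSum_one (β : ℝ) (n : ℕ) (y : ℝ) :
    laguerrePartialSum β n y 1 = laguerre (β + 1) n y := by
  induction n with
  | zero => simp [laguerrePartialSum, laguerre_zero]
  | succ n ih =>
    rw [laguerre_add_one_succ, ← ih, laguerrePartialSum, Finset.sum_range_succ]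
    simp [laguerrePartialSum]

theorem exists_hasDerivAt_laguerrePartialSum (β : ℝ) (n : ℕ) (y r : ℝ) :
    ∃ d, HasDerivAt (laguerrePartialSum β n y) d r ∧
      (1 - r) ^ 2 * d = ((β + 1) * (1 - r) - y) * laguerrePartialSum β n y r +
        r ^ n * ((n + 1 + β) * laguerre β n y * (r - 1) + y * laguerre (β + 1) n y) := by
  induction n with
  | zero =>
    refine ⟨0, ?_, ?_⟩
    · have : laguerrePartialSum β 0 y = fun _ => 1 := by
        funext r
        simp [laguerrePartialSum, laguerre_zero]
      rw [this]
      exact hasDerivAt_const r 1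
    · simp [laguerrePartialSum, laguerre_zero]
      ring
  | succ n ih =>
    obtain ⟨d, hd, hd'⟩ := ih
    have e : laguerrePartialSum β (n + 1) y =
        fun r => laguerrePartialSum β n y r + laguerre β (n + 1) y * r ^ (n + 1) := by
      funext r
      simp only [laguerrePartialSum, Finset.sum_range_succ _ (n + 1)]
    have hd2 := hd.fun_add ((hasDerivAt_pow (n + 1) r).const_mul (laguerre β (n + 1) y))
    rw [← e] at hd2
    refine ⟨_, hd2, ?_⟩
    have h1 := mul_laguerre_add_one β n y
    have h2 := laguerre_add_one_succ β n y
    rw [e]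
    simp only [Nat.add_sub_cancel, h2]
    push_cast
    rw [mul_add, hd']
    linear_combination r ^ n * (1 - r) * h1

theorem mul_laguerrePartialSum_pos {β y σ : ℝ} (hβ : -1 < β) (hy : 0 < y) {n : ℕ}
    (h0 : 0 ≤ σ * laguerre β n y) (h1 : 0 < σ * laguerre (β + 1) n y) {r : ℝ} (hr : 1 ≤ r) :
    0 < σ * laguerrePartialSum β n y r := by
  choose D hD hD' using exists_hasDerivAt_laguerrePartialSum β n y
  set φ := laguerrePartialSum β n y with hφ
  have hn : (0 : ℝ) ≤ n := n.cast_nonneg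
  have key : ∀ s, 1 ≤ s → σ * φ s = 0 → 0 < σ * D s := by
    intro s hs h
    have hs1 : s ≠ 1 := by
      rintro rfl
      rw [hφ, laguerrePartialSum_one] at h
      exact h1.ne' h
    have hs' : 0 < s - 1 := sub_pos.2 (lt_of_le_of_ne hs hs1.symm)
    have hsq : 0 < (1 - s) ^ 2 := by nlinarith
    have e : (1 - s) ^ 2 * (σ * D s) = s ^ n *
        ((n + 1 + β) * (σ * laguerre β n y) * (s - 1) + y * (σ * laguerre (β + 1) n y)) := by
      linear_combination σ * hD' s + ((β + 1) * (1 - s) - y) * h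
    have hp : 0 < (1 - s) ^ 2 * (σ * D s) := by
      rw [e]
      have : 0 < n + 1 + β := by linarith
      positivity
    exact (pos_iff_pos_of_mul_pos hp).1 hsq
  have hd : ∀ s, HasDerivAt (fun s => σ * φ s) (σ * D s) s := fun s => (hD s).const_mul σ
  have hone : 0 < σ * φ 1 := by rwa [hφ, laguerrePartialSum_one]
  have nonneg : ∀ s, 1 ≤ s → 0 ≤ σ * φ s := by
    intro s hs
    have := image_le_of_deriv_right_lt_deriv_boundary (f := fun s => -(σ * φ s))
      (f' := fun s => -(σ * D s)) (a := 1) (b := s) (B := fun _ => 0) (B' := fun _ => 0)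
      (fun u _ => (hd u).neg.continuousAt.continuousWithinAt)
      (fun u _ => (hd u).neg.hasDerivWithinAt) (by linarith) (fun u => hasDerivAt_const u 0)
      (fun u hu h => neg_neg_of_pos (key u hu.1 (neg_eq_zero.1 h))) (x := s) ⟨hs, le_rfl⟩
    linarith
  refine lt_of_le_of_ne (nonneg r hr) fun h => ?_
  rcases hr.eq_or_lt with rfl | hr1
  · exact hone.ne h
  · refine (key r hr h.symm).ne' (IsLocalMin.hasDerivAt_eq_zero ?_ (hd r))
    filter_upwards [Ioi_mem_nhds hr1] with s hs
    rw [← h]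
    exact nonneg s (le_of_lt hs)

theorem Gamma_natCast_add {t : ℝ} (ht : 0 < t) (m : ℕ) :
    Real.Gamma (m + t) = (Nat.factorial m : ℝ) * risingCoeff t m * Real.Gamma t := by
  induction m with
  | zero => simp [risingCoeff_zero]
  | succ m ih =>
    have h := succ_mul_risingCoeff_succ t m
    have : ((m + 1 : ℕ) : ℝ) + t = (m + t) + 1 := by push_cast; ring
    rw [this, Real.Gamma_add_one (by positivity), ih, Nat.factorial_succ]
    push_cast
    linear_combination (-(Nat.factorial m : ℝ) * Real.Gamma t) * h

theorem integrable_and_integral_pow_mul_beta {t : ℝ} (ht0 : 0 < t) (ht1 : t < 1) (m : ℕ) :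
    IntervalIntegrable (fun u : ℝ => u ^ m * (u ^ (t - 1) * (1 - u) ^ (-t))) MeasureTheory.volume
      0 1 ∧ ∫ u : ℝ in 0..1, u ^ m * (u ^ (t - 1) * (1 - u) ^ (-t)) =
        Real.Gamma t * Real.Gamma (1 - t) * risingCoeff t m := by
  have hm : (0 : ℝ) < m + t := by positivity
  have ht : 0 < 1 - t := by linarith
  have hconv := Complex.betaIntegral_convergent (u := ((m + t : ℝ) : ℂ)) (v := ((1 - t : ℝ) : ℂ))
    (by rwa [Complex.ofReal_re]) (by rwa [Complex.ofReal_re])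
  have e : Set.EqOn (fun u : ℝ =>
      ((u : ℂ) ^ (((m + t : ℝ) : ℂ) - 1) * (1 - (u : ℂ)) ^ (((1 - t : ℝ) : ℂ) - 1)))
      (fun u : ℝ => ((u ^ m * (u ^ (t - 1) * (1 - u) ^ (-t)) : ℝ) : ℂ)) (Set.uIoc 0 1) := by
    intro u hu
    rw [Set.uIoc_of_le zero_le_one] at hu
    have h1 : u ^ m * u ^ (t - 1) = u ^ (m + t - 1) := by
      rw [← Real.rpow_natCast, ← Real.rpow_add hu.1]
      ring_nf
    have h2 : (1 - t - 1 : ℝ) = -t := by ring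
    simp only
    rw [← mul_assoc, h1, ← h2]
    rw [Complex.ofReal_mul, Complex.ofReal_cpow hu.1.le, Complex.ofReal_cpow (by linarith [hu.2])]
    push_cast
    rfl
  have hbeta : IntervalIntegrable
      (fun u : ℝ => ((u ^ m * (u ^ (t - 1) * (1 - u) ^ (-t)) : ℝ) : ℂ)) MeasureTheory.volume 0 1 :=
    hconv.congr e
  refine ⟨⟨hbeta.1.re, hbeta.2.re⟩, ?_⟩
  have hval := ProbabilityTheory.beta_eq_betaIntegralReal (m + t) (1 - t) hm ht
  rw [Complex.betaIntegral, intervalIntegral.integral_congr_ae (Filter.Eventually.of_forall e),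
    intervalIntegral.integral_ofReal, Complex.ofReal_re] at hval
  rw [← hval, ProbabilityTheory.beta, Gamma_natCast_add ht0]
  have : (m : ℝ) + t + (1 - t) = m + 1 := by ring
  rw [this, Real.Gamma_nat_eq_factorial]
  have : (Nat.factorial m : ℝ) ≠ 0 := by positivity
  field_simp

theorem sum_risingCoeff_mul_pos {t : ℝ} (ht0 : 0 < t) (ht1 : t < 1) (n : ℕ) (f : ℕ → ℝ)
    (h : ∀ u ∈ Set.Ioo (0 : ℝ) 1, 0 < ∑ p ∈ HasAntidiagonal.antidiagonal n, u ^ p.1 * f p.2) :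
    0 < ∑ p ∈ HasAntidiagonal.antidiagonal n, risingCoeff t p.1 * f p.2 := by
  have hI := integrable_and_integral_pow_mul_beta ht0 ht1
  have hbeta : ∀ p ∈ HasAntidiagonal.antidiagonal n, IntervalIntegrable
      (fun u : ℝ => u ^ p.1 * (u ^ (t - 1) * (1 - u) ^ (-t)) * f p.2) MeasureTheory.volume 0 1 :=
    fun p _ => (hI p.1).1.mul_const _
  have hsum : ∫ u : ℝ in 0..1, ∑ p ∈ HasAntidiagonal.antidiagonal n,
      u ^ p.1 * (u ^ (t - 1) * (1 - u) ^ (-t)) * f p.2 = Real.Gamma t * Real.Gamma (1 - t) *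
        ∑ p ∈ HasAntidiagonal.antidiagonal n, risingCoeff t p.1 * f p.2 := by
    rw [intervalIntegral.integral_finsetSum hbeta, Finset.mul_sum]
    refine Finset.sum_congr rfl fun p _ => ?_
    rw [intervalIntegral.integral_mul_const, (hI p.1).2]
    ring
  have hpos : 0 < ∫ u : ℝ in 0..1, ∑ p ∈ HasAntidiagonal.antidiagonal n,
      u ^ p.1 * (u ^ (t - 1) * (1 - u) ^ (-t)) * f p.2 := by
    refine intervalIntegral.intervalIntegral_pos_of_pos_on
      (by simpa only [Finset.sum_fn] using IntervalIntegrable.sum _ hbeta)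
      (fun u hu => ?_) zero_lt_one
    have e : ∑ p ∈ HasAntidiagonal.antidiagonal n,
        u ^ p.1 * (u ^ (t - 1) * (1 - u) ^ (-t)) * f p.2 =
        (∑ p ∈ HasAntidiagonal.antidiagonal n, u ^ p.1 * f p.2) *
          (u ^ (t - 1) * (1 - u) ^ (-t)) := by
      rw [Finset.sum_mul]
      exact Finset.sum_congr rfl fun p _ => by ring
    rw [e]
    exact mul_pos (h u hu) (mul_pos (Real.rpow_pos_of_pos hu.1 _)
      (Real.rpow_pos_of_pos (by linarith [hu.2]) _))
  rw [hsum] at hpos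
  exact (pos_iff_pos_of_mul_pos hpos).1
    (mul_pos (Real.Gamma_pos_of_pos ht0) (Real.Gamma_pos_of_pos (by linarith)))

/-- If `L_n^β` and `L_n^{β+1}` have the same sign at `y > 0`, then so does `L_n^{β+t}` for
`0 < t ≤ 1`. -/
theorem mul_laguerre_add_pos {β y σ t : ℝ} (hβ : -1 < β) (hy : 0 < y) {n : ℕ}
    (h0 : 0 ≤ σ * laguerre β n y) (h1 : 0 < σ * laguerre (β + 1) n y) (ht0 : 0 < t) (ht1 : t ≤ 1) :
    0 < σ * laguerre (β + t) n y := by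
  rcases ht1.eq_or_lt with rfl | ht1
  · exact h1
  rw [laguerre_add_eq_sum, Finset.mul_sum]
  simp only [mul_left_comm σ]
  refine sum_risingCoeff_mul_pos ht0 ht1 n (fun k => σ * laguerre β k y) fun u hu => ?_
  have e : ∑ p ∈ HasAntidiagonal.antidiagonal n, u ^ p.1 * (σ * laguerre β p.2 y) =
      u ^ n * (σ * laguerrePartialSum β n y u⁻¹) := by
    rw [← Finset.Nat.sum_antidiagonal_swap, Finset.Nat.sum_antidiagonal_eq_sum_range_succ_mk,
      laguerrePartialSum, Finset.mul_sum, Finset.mul_sum]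
    refine Finset.sum_congr rfl fun k hk => ?_
    have hk' : k ≤ n := Nat.lt_succ_iff.1 (Finset.mem_range.1 hk)
    have hu0 : u ≠ 0 := hu.1.ne'
    simp only [Prod.swap]
    rw [pow_sub₀ _ hu0 hk', inv_pow]
    ring
  rw [e]
  exact mul_pos (pow_pos hu.1 n)
    (mul_laguerrePartialSum_pos hβ hy h0 h1 ((one_le_inv₀ hu.1).2 hu.2.le))

/-- At a zero of `L_{n+1}^α`, the polynomials `L_{n+1}^{α+t}` and `L_n^{α+1} = -(L_{n+1}^α)'` have
the same sign. -/
theorem laguerre_mul_laguerre_add_pos_of_eq_zero {α y t : ℝ} (hα : -1 < α) {n : ℕ}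
    (h : laguerre α (n + 1) y = 0) (ht0 : 0 < t) (ht2 : t ≤ 2) :
    0 < laguerre (α + 1) n y * laguerre (α + t) (n + 1) y := by
  have hy : 0 < y := by
    by_contra! hy
    exact (laguerre_pos_of_nonpos hα (n + 1) hy).ne' h
  have hn : (0 : ℝ) ≤ n := n.cast_nonneg
  set V := laguerre (α + 1) n y with hV
  have hL : laguerre (α + 1) (n + 1) y = V := by rw [laguerre_add_one_succ, h, add_zero]
  have hVne : V ≠ 0 := by
    intro h0
    have := mul_laguerre_add_one α n y
    rw [← hV, h, h0, mul_zero, mul_zero, sub_zero, eq_comm] at this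
    exact (mul_eq_zero.1 this).elim (fun h1 => by linarith) (laguerre_succ_ne_zero hα n h)
  have hVV : 0 < V * V := mul_self_pos.2 hVne
  rcases le_or_gt t 1 with ht1 | ht1
  · exact mul_laguerre_add_pos hα hy (by rw [h, mul_zero]) (by rwa [hL]) ht0 ht1
  · have hL2 : y * laguerre (α + 1 + 1) (n + 1) y = (1 + α + y) * V := by
      have h1 := mul_laguerre_add_one (α + 1) (n + 1) y
      have h2 := mul_laguerre_add_one α (n + 1) y
      have h3 := laguerre_add_one_succ α (n + 1) y
      rw [hL] at h1 h2 h3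
      rw [h] at h2
      rw [h3] at h1
      push_cast at h1 h2
      linear_combination h1 - h2
    have := mul_laguerre_add_pos (β := α + 1) (σ := V) (t := t - 1) (n := n + 1) (by linarith) hy
      (by rw [hL]; exact hVV.le) ?_ (by linarith) (by linarith)
    · rwa [show α + 1 + (t - 1) = α + t by ring] at this
    · have : 0 < y * (V * laguerre (α + 1 + 1) (n + 1) y) := by
        rw [mul_left_comm, hL2, mul_left_comm]
        exact mul_pos (by linarith) hVV
      exact (pos_iff_pos_of_mul_pos this).1 hy

open Polynomial in
/-- `laguerre α n` as a polynomial. -/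
noncomputable def laguerrePoly (α : ℝ) (n : ℕ) : ℝ[X] :=
  ∑ k ∈ Finset.range (n + 1),
    C ((-1 : ℝ) ^ k * (∏ i ∈ Finset.range (n - k), (α + k + 1 + i)) /
      ((Nat.factorial (n - k) : ℝ) * (Nat.factorial k : ℝ))) * X ^ k

theorem eval_laguerrePoly (α : ℝ) (n : ℕ) (x : ℝ) :
    (laguerrePoly α n).eval x = laguerre α n x := by
  simp [laguerrePoly, laguerre, Polynomial.eval_finsetSum]

theorem eval_laguerrePoly_eq (α : ℝ) (n : ℕ) :
    (fun x => (laguerrePoly α n).eval x) = laguerre α n :=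
  funext (eval_laguerrePoly α n)

theorem coeff_laguerrePoly (α : ℝ) (n : ℕ) :
    (laguerrePoly α n).coeff n = (-1) ^ n / (Nat.factorial n : ℝ) := by
  simp [laguerrePoly, Polynomial.coeff_C_mul, Polynomial.coeff_X_pow]

theorem coeff_laguerrePoly_ne_zero (α : ℝ) (n : ℕ) : (laguerrePoly α n).coeff n ≠ 0 := by
  rw [coeff_laguerrePoly]
  positivity

theorem laguerrePoly_ne_zero (α : ℝ) (n : ℕ) : laguerrePoly α n ≠ 0 := fun h =>
  coeff_laguerrePoly_ne_zero α n (by rw [h, Polynomial.coeff_zero])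

theorem natDegree_laguerrePoly (α : ℝ) (n : ℕ) : (laguerrePoly α n).natDegree = n := by
  refine le_antisymm (Polynomial.natDegree_sum_le_of_forall_le _ _ fun k hk => ?_)
    (Polynomial.le_natDegree_of_ne_zero (coeff_laguerrePoly_ne_zero α n))
  exact (Polynomial.natDegree_C_mul_X_pow_le _ _).trans (Nat.lt_succ_iff.1 (Finset.mem_range.1 hk))

theorem mem_roots_laguerrePoly {α : ℝ} {n : ℕ} {x : ℝ} :
    x ∈ (laguerrePoly α n).roots ↔ laguerre α n x = 0 := by
  rw [Polynomial.mem_roots (laguerrePoly_ne_zero α n), Polynomial.IsRoot.def, eval_laguerrePoly]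

theorem continuous_laguerre (α : ℝ) (n : ℕ) : Continuous (laguerre α n) := by
  rw [← eval_laguerrePoly_eq]
  exact (laguerrePoly α n).continuous

theorem eval_derivative_laguerrePoly_succ (α : ℝ) (n : ℕ) (x : ℝ) :
    (laguerrePoly α (n + 1)).derivative.eval x = -laguerre (α + 1) n x := by
  have h := (laguerrePoly α (n + 1)).hasDerivAt x
  rw [eval_laguerrePoly_eq] at h
  exact h.unique (hasDerivAt_laguerre_succ α n x)

theorem exists_hasDerivAt_laguerre_add_one (α : ℝ) (n : ℕ) (x : ℝ) :
    ∃ d, HasDerivAt (laguerre (α + 1) n) d x ∧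
      x * d + (α + 1 - x) * laguerre (α + 1) n x = (n + 1) * laguerre α (n + 1) x := by
  have h1 := mul_laguerre_add_one α n x
  cases n with
  | zero =>
    refine ⟨0, ?_, ?_⟩
    · have : laguerre (α + 1) 0 = fun _ => 1 := funext (laguerre_zero _)
      rw [this]
      exact hasDerivAt_const x 1
    · rw [laguerre_zero, laguerre_zero] at h1
      rw [laguerre_zero]
      push_cast at h1 ⊢
      linear_combination -h1
  | succ m =>
    refine ⟨_, hasDerivAt_laguerre_succ (α + 1) m x, ?_⟩
    have h2 := mul_laguerre_add_one (α + 1) m x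
    have h3 := laguerre_add_one_succ α m x
    push_cast at h1 ⊢
    linear_combination -h1 - h2 + (m + 2 + α) * h3

/-- Rolle's theorem for `x ^ (α + 1) * exp (-x) * L_n^{α+1}`. -/
theorem exists_laguerre_succ_eq_zero {α : ℝ} (hα : -1 < α) {n : ℕ} {x y : ℝ} (hx0 : 0 ≤ x)
    (hxy : x < y) (hx : x = 0 ∨ laguerre (α + 1) n x = 0) (hy : laguerre (α + 1) n y = 0) :
    ∃ z ∈ Set.Ioo x y, laguerre α (n + 1) z = 0 := by
  choose D hD hD' using exists_hasDerivAt_laguerre_add_one α n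
  have hα' : 0 < α + 1 := by linarith
  have hderiv : ∀ u ∈ Set.Ioo x y,
      HasDerivAt (fun u => u ^ (α + 1) * (Real.exp (-u) * laguerre (α + 1) n u))
        (u ^ α * Real.exp (-u) * ((n + 1) * laguerre α (n + 1) u)) u := by
    intro u hu
    have hu0 : 0 < u := hx0.trans_lt hu.1
    have h1 := (Real.hasDerivAt_rpow_const (x := u) (p := α + 1) (Or.inl hu0.ne')).mul
      (((hasDerivAt_neg u).exp).mul (hD u))
    refine h1.congr_deriv ?_
    rw [← hD' u, add_sub_cancel_right, Real.rpow_add_one hu0.ne']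
    simp only [Pi.mul_apply]
    ring
  have hcont : ContinuousOn (fun u => u ^ (α + 1) * (Real.exp (-u) * laguerre (α + 1) n u))
      (Set.Icc x y) :=
    ((Real.continuous_rpow_const hα'.le).mul
      ((Real.continuous_exp.comp continuous_neg).mul (continuous_laguerre _ n))).continuousOn
  have hends : x ^ (α + 1) * (Real.exp (-x) * laguerre (α + 1) n x) =
      y ^ (α + 1) * (Real.exp (-y) * laguerre (α + 1) n y) := by
    rcases hx with rfl | hx
    · rw [Real.zero_rpow hα'.ne', hy]
      simp
    · rw [hx, hy]
      simp
  obtain ⟨z, hz, hz0⟩ := exists_hasDerivAt_eq_zero hxy hcont hends hderiv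
  refine ⟨z, hz, ?_⟩
  have hz' : 0 < z := hx0.trans_lt hz.1
  have : 0 < z ^ α * Real.exp (-z) := by positivity
  have hn : (n : ℝ) + 1 ≠ 0 := by positivity
  simpa [this.ne', hn] using hz0

theorem nodup_roots_laguerrePoly {α : ℝ} (hα : -1 < α) (n : ℕ) :
    (laguerrePoly α n).roots.Nodup := by
  rw [Multiset.nodup_iff_count_le_one]
  intro y
  by_contra! hy
  rw [Polynomial.count_roots,
    Polynomial.one_lt_rootMultiplicity_iff_isRoot (laguerrePoly_ne_zero α n)] at hy
  obtain ⟨h0, h1⟩ := hy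
  rw [Polynomial.IsRoot.def] at h0 h1
  rw [eval_laguerrePoly] at h0
  cases n with
  | zero => simp [laguerre_zero] at h0
  | succ n =>
    rw [eval_derivative_laguerrePoly_succ, neg_eq_zero] at h1
    have := laguerre_mul_laguerre_add_pos_of_eq_zero hα h0 one_pos one_le_two
    rw [h1, zero_mul] at this
    exact this.false

theorem card_roots_laguerrePoly {α : ℝ} (hα : -1 < α) (n : ℕ) :
    (laguerrePoly α n).roots.card = n := by
  induction n generalizing α with
  | zero => simpa [natDegree_laguerrePoly] using (laguerrePoly α 0).card_roots'
  | succ n ih =>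
    have hβ : -1 < α + 1 := by linarith
    have hpos : ∀ x, laguerre (α + 1) n x = 0 → 0 < x := by
      intro x hx
      by_contra! h
      exact (laguerre_pos_of_nonpos hβ n h).ne' hx
    have hle : (insert 0 (laguerrePoly (α + 1) n).roots.toFinset).card ≤
        (laguerrePoly α (n + 1)).roots.toFinset.card + 1 := by
      refine Finset.card_le_of_interleaved fun x hx y hy hxy _ => ?_
      simp only [Finset.mem_insert, Multiset.mem_toFinset, mem_roots_laguerrePoly] at hx hy
      have hx0 : 0 ≤ x := hx.elim (fun h => h.ge) (fun h => (hpos x h).le)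
      obtain ⟨z, hz, hz0⟩ := exists_laguerre_succ_eq_zero hα hx0 hxy hx
        (hy.resolve_left (hx0.trans_lt hxy).ne')
      exact ⟨z, by rwa [Multiset.mem_toFinset, mem_roots_laguerrePoly], hz.1, hz.2⟩
    rw [Finset.card_insert_of_notMem, Multiset.toFinset_card_of_nodup
      (nodup_roots_laguerrePoly hβ n), ih hβ, Multiset.toFinset_card_of_nodup
      (nodup_roots_laguerrePoly hα _)] at hle
    · obtain ⟨q, -, hq, hq0⟩ :=
        Polynomial.exists_prod_multiset_X_sub_C_mul (laguerrePoly α (n + 1))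
      rw [natDegree_laguerrePoly] at hq
      have hq1 : q.natDegree ≠ 1 := by
        intro h
        have hne : q ≠ 0 := by
          rintro rfl
          simp at h
        obtain ⟨r, hr⟩ := Polynomial.exists_root_of_degree_eq_one
          ((Polynomial.degree_eq_iff_natDegree_eq hne).2 h)
        rw [← Polynomial.mem_roots hne, hq0] at hr
        simp at hr
      omega
    · rw [Multiset.mem_toFinset, mem_roots_laguerrePoly]
      exact fun h => (hpos 0 h).false

/-- The partial fraction expansion of `L_n^{α+t} / L_n^α`, whose residues are negative. -/
theorem exists_laguerre_add_eq_mul_sum {α t : ℝ} (hα : -1 < α) (ht0 : 0 < t) (ht2 : t ≤ 2) {n : ℕ}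
    (hn : 1 ≤ n) : ∃ (S : Finset ℝ) (A : ℝ → ℝ), S.Nonempty ∧ (∀ i ∈ S, laguerre α n i = 0) ∧
      (∀ i ∈ S, A i < 0) ∧ ∀ x, laguerre α n x ≠ 0 →
        laguerre (α + t) n x = laguerre α n x * (1 + ∑ i ∈ S, A i * (x - i)⁻¹) := by
  obtain ⟨m, rfl⟩ : ∃ m, n = m + 1 := ⟨n - 1, by omega⟩
  set P := laguerrePoly α (m + 1) with hP
  set Q := laguerrePoly (α + t) (m + 1) with hQ
  set S := P.roots.toFinset with hS
  set c := P.leadingCoeff with hc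
  have hmem : ∀ i ∈ S, laguerre α (m + 1) i = 0 := fun i hi =>
    mem_roots_laguerrePoly.1 (Multiset.mem_toFinset.1 hi)
  have hcard : S.card = m + 1 := by
    rw [hS, Multiset.toFinset_card_of_nodup (nodup_roots_laguerrePoly hα _),
      card_roots_laguerrePoly hα]
  have hfac : P = Polynomial.C c * Lagrange.nodal S id := by
    have h := Polynomial.C_leadingCoeff_mul_prod_multiset_X_sub_C (p := P)
      (by rw [card_roots_laguerrePoly hα, natDegree_laguerrePoly])
    rw [← hc] at h
    rw [Lagrange.nodal_eq, Finset.prod, hS, Multiset.toFinset_val,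
      (nodup_roots_laguerrePoly hα _).dedup]
    exact h.symm
  have hc0 : c ≠ 0 := Polynomial.leadingCoeff_ne_zero.2 (laguerrePoly_ne_zero _ _)
  have hdeg : (Q - P).degree < S.card := by
    have hdegP : P.degree = ((m + 1 : ℕ) : WithBot ℕ) := by
      rw [Polynomial.degree_eq_natDegree (laguerrePoly_ne_zero _ _), natDegree_laguerrePoly]
    have hdegQ : Q.degree = ((m + 1 : ℕ) : WithBot ℕ) := by
      rw [Polynomial.degree_eq_natDegree (laguerrePoly_ne_zero _ _), natDegree_laguerrePoly]
    rw [hcard, ← hdegQ]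
    refine Polynomial.degree_sub_lt_left (by rw [hdegP, hdegQ]) (laguerrePoly_ne_zero _ _) ?_
    rw [Polynomial.leadingCoeff, Polynomial.leadingCoeff, natDegree_laguerrePoly,
      natDegree_laguerrePoly, coeff_laguerrePoly, coeff_laguerrePoly]
  have hinterp : Q - P = Lagrange.interpolate S id (fun i => laguerre (α + t) (m + 1) i) := by
    refine Lagrange.eq_interpolate_of_eval_eq _ Function.injective_id.injOn hdeg fun i hi => ?_
    rw [id, Polynomial.eval_sub, eval_laguerrePoly, eval_laguerrePoly, hmem i hi, sub_zero]
  refine ⟨S, fun i => c⁻¹ * (Lagrange.nodalWeight S id i * laguerre (α + t) (m + 1) i),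
    Finset.card_pos.1 (by omega), hmem, fun i hi => ?_, fun x hx => ?_⟩
  · have hder : c * (Lagrange.nodal S id).derivative.eval i = -laguerre (α + 1) m i := by
      rw [← eval_derivative_laguerrePoly_succ, ← hP]
      conv_rhs => rw [hfac]
      rw [Polynomial.derivative_C_mul, Polynomial.eval_mul, Polynomial.eval_C]
    have hprod := laguerre_mul_laguerre_add_pos_of_eq_zero hα (hmem i hi) ht0 ht2
    have e : c⁻¹ * (Lagrange.nodalWeight S id i * laguerre (α + t) (m + 1) i) =
        -(laguerre (α + t) (m + 1) i / laguerre (α + 1) m i) := by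
      rw [Lagrange.nodalWeight_eq_eval_derivative_nodal hi, id, ← mul_assoc, ← mul_inv, hder,
        inv_neg]
      ring
    refine e.trans_lt (neg_lt_zero.2 (div_pos_iff.2 ?_))
    rw [mul_comm] at hprod
    exact pos_and_pos_or_neg_and_neg_of_mul_pos hprod
  · have h := congrArg (Polynomial.eval x) hinterp
    have hxS : ∀ i ∈ S, x ≠ id i := by
      rintro i hi rfl
      exact hx (hmem _ hi)
    have hPx : laguerre α (m + 1) x = c * (Lagrange.nodal S id).eval x := by
      rw [← eval_laguerrePoly, ← hP]
      conv_lhs => rw [hfac]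
      rw [Polynomial.eval_mul, Polynomial.eval_C]
    rw [Lagrange.eval_interpolate_not_at_node _ hxS, Polynomial.eval_sub, eval_laguerrePoly,
      eval_laguerrePoly, sub_eq_iff_eq_add'] at h
    rw [h, mul_add, mul_one, add_right_inj, hPx, mul_comm c, mul_assoc,
      Finset.mul_sum _ _ c]
    congr 1
    refine Finset.sum_congr rfl fun i _ => ?_
    simp only [id, ← mul_assoc, mul_inv_cancel₀ hc0]
    ring

theorem exists_mem_Ioo_eq_zero_of_mul_neg {f : ℝ → ℝ} (hf : Continuous f) {x y : ℝ} (hxy : x < y)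
    (h : f x * f y < 0) : ∃ z ∈ Set.Ioo x y, f z = 0 := by
  rcases mul_neg_iff.1 h with ⟨h1, h2⟩ | ⟨h1, h2⟩
  · exact intermediate_value_Ioo' hxy.le hf.continuousOn ⟨h2, h1⟩
  · exact intermediate_value_Ioo hxy.le hf.continuousOn ⟨h1, h2⟩

/-- The derivative of a polynomial does not have the same sign at two consecutive roots. -/
theorem eval_derivative_mul_nonpos_of_consecutive_roots {p : Polynomial ℝ} {x y : ℝ} (hxy : x < y)
    (hx : p.eval x = 0) (hy : p.eval y = 0) (h : ∀ u ∈ Set.Ioo x y, p.eval u ≠ 0) :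
    p.derivative.eval x * p.derivative.eval y ≤ 0 := by
  by_contra! hpos
  obtain ⟨q, rfl⟩ := Polynomial.dvd_iff_isRoot.2 hx
  have hq : q.eval y = 0 := by
    simpa [sub_ne_zero.2 hxy.ne'] using hy
  obtain ⟨r, rfl⟩ := Polynomial.dvd_iff_isRoot.2 hq
  simp [Polynomial.derivative_mul] at hpos
  obtain ⟨z, hz, hz0⟩ := exists_mem_Ioo_eq_zero_of_mul_neg r.continuous hxy (by
    have : 0 < (y - x) ^ 2 := by nlinarith
    nlinarith)
  exact h z hz (by simp [hz0])

theorem zeros_R_interlace_with_L_n_alpha (α t a : ℝ) (hα : α > -1) (ht0 : 0 < t)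
    (ht2 : t ≤ 2) (ha : a ≠ 0) (n : ℕ) (hn : 1 ≤ n)
    (R : ℝ → ℝ) (hR : ∀ x, R x = laguerre α n x + a * laguerre (α + t) n x)
    (x x' : ℝ) (hlt : x < x') (hx : laguerre α n x = 0) (hx' : laguerre α n x' = 0)
    (hcons : ∀ u ∈ Set.Ioo x x', laguerre α n u ≠ 0) :
    (∃! z, z ∈ Set.Ioo x x' ∧ R z = 0) ∧ R x * R x' < 0 := by
  obtain ⟨m, rfl⟩ : ∃ m, n = m + 1 := ⟨n - 1, by omega⟩
  have hα' : -1 < α := hα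
  have hcont : Continuous R := by
    rw [funext hR]
    exact (continuous_laguerre _ _).add (continuous_const.mul (continuous_laguerre _ _))
  have hneg : R x * R x' < 0 := by
    have h1 := laguerre_mul_laguerre_add_pos_of_eq_zero hα' hx ht0 ht2
    have h2 := laguerre_mul_laguerre_add_pos_of_eq_zero hα' hx' ht0 ht2
    have h3 := eval_derivative_mul_nonpos_of_consecutive_roots (p := laguerrePoly α (m + 1)) hlt
      (by rwa [eval_laguerrePoly]) (by rwa [eval_laguerrePoly])
      (by simpa only [eval_laguerrePoly] using hcons)
    rw [eval_derivative_laguerrePoly_succ, eval_derivative_laguerrePoly_succ, neg_mul_neg] at h3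
    have h4 : laguerre (α + t) (m + 1) x * laguerre (α + t) (m + 1) x' < 0 := by
      by_contra! h
      nlinarith [mul_pos h1 h2, mul_nonneg h (neg_nonneg.2 h3)]
    have h5 : 0 < a ^ 2 := by positivity
    rw [hR, hR, hx, hx']
    nlinarith [mul_neg_of_pos_of_neg h5 h4]
  refine ⟨?_, hneg⟩
  obtain ⟨S, A, hS, hroot, hA, hfrac⟩ := exists_laguerre_add_eq_mul_sum hα' ht0 ht2 hn
  have hsum : ∀ z ∈ Set.Ioo x x', R z = 0 → ∑ i ∈ S, A i * (z - i)⁻¹ = -1 / a - 1 := by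
    intro z hz h
    rw [hR, hfrac z (hcons z hz)] at h
    have h' : laguerre α (m + 1) z * (1 + a * (1 + ∑ i ∈ S, A i * (z - i)⁻¹)) = 0 := by
      linear_combination h
    have h'' := (mul_eq_zero.1 h').resolve_left (hcons z hz)
    generalize ∑ i ∈ S, A i * (z - i)⁻¹ = s at h'' ⊢
    field_simp
    linear_combination h''
  have hmono : ∀ z ∈ Set.Ioo x x', ∀ w ∈ Set.Ioo x x', R z = 0 → R w = 0 → ¬z < w := by
    intro z hz w hw hz0 hw0 hzw
    refine ((hsum z hz hz0).trans (hsum w hw hw0).symm).not_lt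
      (Finset.sum_lt_sum_of_nonempty hS fun i hi => mul_lt_mul_of_neg_left ?_ (hA i hi))
    have hi' : i ∉ Set.Ioo x x' := fun h => hcons i h (hroot i hi)
    rcases le_or_gt i x with hix | hix
    · exact inv_strictAnti₀ (by linarith [hz.1]) (by linarith)
    · have : x' ≤ i := not_lt.1 fun h => hi' ⟨hix, h⟩
      exact (inv_lt_inv_of_neg (by linarith [hw.2]) (by linarith [hz.2])).2 (by linarith)
  obtain ⟨z, hz, hz0⟩ := exists_mem_Ioo_eq_zero_of_mul_neg hcont hlt hneg
  refine ⟨z, ⟨hz, hz0⟩, fun w hw => ?_⟩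
  exact le_antisymm (not_lt.1 (hmono z hz w hw.1 hz0 hw.2)) (not_lt.1 (hmono w hw.1 z hz hw.2 hz0))
end

section
/- Let α > -1, 0 < t < 2, and n ≥ 2. Write 0 < x_1 < ... < x_n for the zeros of L_n^α, 0 < y_1 < ... < y_{n-1} for the zeros of L_{n-1}^α, 0 < t_1 < ... < t_{n-1} for the zeros of L_{n-1}^{α+t}, and 0 < X_1 < ... < X_{n-1} for the zeros of L_{n-1}^{α+2}. Then x_k < y_k < t_k < X_k < x_{k+1} for every k = 1, ..., n-1. -/
open Finset

namespace laguerrePoly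

open Polynomial

theorem eval_eq (α : ℝ) (n : ℕ) (x : ℝ) : (laguerrePoly α n).eval x = laguerre α n x := by
  simp [laguerrePoly, laguerre, eval_finsetSum]

theorem coeff_eq (α : ℝ) (n k : ℕ) : (laguerrePoly α n).coeff k =
    if k ≤ n then (-1 : ℝ) ^ k * (∏ i ∈ Finset.range (n - k), (α + k + 1 + i)) /
      ((Nat.factorial (n - k) : ℝ) * (Nat.factorial k : ℝ)) else 0 := by
  simp only [laguerrePoly, finsetSum_coeff, coeff_C_mul, coeff_X_pow, mul_ite, mul_one, mul_zero,
    Finset.sum_ite_eq, Finset.mem_range, Nat.lt_succ_iff]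

theorem coeff_succ (α : ℝ) (n k : ℕ) :
    ((k : ℝ) + 1) * (k + 1 + α) * (laguerrePoly α n).coeff (k + 1) =
      (k - n) * (laguerrePoly α n).coeff k := by
  rw [coeff_eq, coeff_eq]
  rcases lt_trichotomy k n with h | rfl | h
  · obtain ⟨m, rfl⟩ := Nat.exists_eq_add_of_lt h
    rw [if_pos (by omega), if_pos (by omega), show k + m + 1 - (k + 1) = m by omega,
      show k + m + 1 - k = m + 1 by omega, Finset.prod_range_succ', Nat.factorial_succ,
      Nat.factorial_succ]
    have hprod : ∏ i ∈ Finset.range m, (α + k + 1 + ((i + 1 : ℕ) : ℝ)) =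
        ∏ i ∈ Finset.range m, (α + ((k + 1 : ℕ) : ℝ) + 1 + i) :=
      Finset.prod_congr rfl fun i _ => by push_cast; ring
    rw [hprod]
    push_cast
    have hm : (m.factorial : ℝ) ≠ 0 := by positivity
    have hk : (k.factorial : ℝ) ≠ 0 := by positivity
    have hm' : (m : ℝ) + 1 ≠ 0 := by positivity
    have hk' : (k : ℝ) + 1 ≠ 0 := by positivity
    field_simp
    ring
  · simp
  · rw [if_neg (by omega), if_neg (by omega)]
    simp

theorem differential_equation (α : ℝ) (n : ℕ) :
    X * derivative (derivative (laguerrePoly α n)) +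
      (C (α + 1) - X) * derivative (laguerrePoly α n) + C (n : ℝ) * laguerrePoly α n = 0 := by
  ext k
  have h := coeff_succ α n k
  rcases k with _ | k
  · simp [sub_mul, coeff_derivative] at h ⊢
    linarith
  · simp [sub_mul, coeff_derivative, coeff_X_mul, -map_add] at h ⊢
    linarith

theorem coeff_self_ne_zero (α : ℝ) (n : ℕ) : (laguerrePoly α n).coeff n ≠ 0 := by
  rw [coeff_eq, if_pos le_rfl]
  simp [Nat.factorial_ne_zero]

theorem natDegree_eq (α : ℝ) (n : ℕ) : (laguerrePoly α n).natDegree = n := by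
  refine le_antisymm (natDegree_le_iff_coeff_eq_zero.2 fun k hk => ?_)
    (le_natDegree_of_ne_zero (coeff_self_ne_zero α n))
  rw [coeff_eq, if_neg (by omega)]

end laguerrePoly

/-- A polynomial vanishing at as many distinct nodes as its degree is a multiple of the
nodal polynomial. -/
theorem Polynomial.eq_C_mul_nodal {ι F : Type*} [Field F] [DecidableEq ι] {s : Finset ι}
    {v : ι → F} (hv : Set.InjOn v s) {p : Polynomial F} (hdeg : p.natDegree = #s)
    (hp : ∀ i ∈ s, p.eval (v i) = 0) :
    p = C p.leadingCoeff * Lagrange.nodal s v := by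
  rcases eq_or_ne p 0 with rfl | h0
  · simp
  refine Polynomial.eq_of_degree_sub_lt_of_eval_index_eq s hv ?_ fun i hi => ?_
  · have hlc : p.leadingCoeff ≠ 0 := leadingCoeff_ne_zero.2 h0
    rw [← hdeg, ← degree_eq_natDegree h0]
    refine degree_sub_lt_left ?_ h0 ?_
    · rw [degree_C_mul hlc, Lagrange.degree_nodal, degree_eq_natDegree h0, hdeg]
    · simp [Lagrange.nodal_monic.leadingCoeff]
  · simp [hp i hi, Lagrange.eval_nodal_at_node hi]

open Polynomial in
theorem Lagrange.eval_derivative_derivative_nodal {ι F : Type*} [Field F] [DecidableEq ι]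
    {s : Finset ι} {v : ι → F} (hv : Set.InjOn v s) {k : ι} (hk : k ∈ s) :
    (derivative (derivative (nodal s v))).eval (v k) =
      (∑ j ∈ s.erase k, 2 / (v k - v j)) * (derivative (nodal s v)).eval (v k) := by
  have hsub : ∀ j ∈ s.erase k, v k - v j ≠ 0 := fun j hj => by
    rw [Finset.mem_erase] at hj
    exact sub_ne_zero.2 fun h => hj.1 (hv hj.2 hk h.symm)
  have hsplit : nodal s v = (X - C (v k)) * nodal (s.erase k) v := nodal_eq_mul_nodal_erase hk
  have hlog : (derivative (nodal (s.erase k) v)).eval (v k) =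
      (∑ j ∈ s.erase k, 1 / (v k - v j)) * (nodal (s.erase k) v).eval (v k) := by
    rw [derivative_nodal, eval_finsetSum, Finset.sum_mul]
    refine Finset.sum_congr rfl fun j hj => ?_
    rw [nodal_eq_mul_nodal_erase (v := v) hj, eval_mul, eval_sub, eval_X, eval_C]
    have := hsub j hj
    field_simp
  have htwo : ∑ j ∈ s.erase k, 2 / (v k - v j) = 2 * ∑ j ∈ s.erase k, 1 / (v k - v j) := by
    rw [Finset.mul_sum]
    exact Finset.sum_congr rfl fun j _ => by ring
  rw [hsplit, htwo]
  simp [hlog]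
  ring

/-- Stieltjes' electrostatic equilibrium equations for the zeros of `L_n^α`. -/
theorem laguerre_zeros_equilibrium {ι : Type*} [DecidableEq ι] {s : Finset ι} {v : ι → ℝ}
    {α : ℝ} {n : ℕ} (hs : #s = n) (hv : Set.InjOn v s) (hzero : ∀ i ∈ s, laguerre α n (v i) = 0)
    {k : ι} (hk : k ∈ s) (hk0 : v k ≠ 0) :
    ∑ j ∈ s.erase k, 2 / (v k - v j) = 1 - (α + 1) / v k := by
  have hp := Polynomial.eq_C_mul_nodal hv ((laguerrePoly.natDegree_eq α n).trans hs.symm)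
    fun i hi => (laguerrePoly.eval_eq α n (v i)).trans (hzero i hi)
  have hlc : (laguerrePoly α n).leadingCoeff ≠ 0 := by
    rw [Polynomial.leadingCoeff, laguerrePoly.natDegree_eq]
    exact laguerrePoly.coeff_self_ne_zero α n
  have hd : (Polynomial.derivative (Lagrange.nodal s v)).eval (v k) ≠ 0 := by
    rw [Lagrange.eval_nodal_derivative_eval_node_eq hk, Lagrange.eval_nodal]
    refine Finset.prod_ne_zero_iff.2 fun j hj => ?_
    rw [Finset.mem_erase] at hj
    exact sub_ne_zero.2 fun h => hj.1 (hv hj.2 hk h.symm)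
  have hode := congrArg (Polynomial.eval (v k)) (laguerrePoly.differential_equation α n)
  rw [hp] at hode
  simp only [Polynomial.derivative_C_mul, Polynomial.eval_add, Polynomial.eval_mul,
    Polynomial.eval_sub, Polynomial.eval_X, Polynomial.eval_C, Polynomial.eval_zero,
    Lagrange.eval_nodal_at_node hk, Lagrange.eval_derivative_derivative_nodal hv hk] at hode
  have h : v k * (∑ j ∈ s.erase k, 2 / (v k - v j)) + (α + 1 - v k) = 0 := by
    refine (mul_eq_zero.1 ?_).resolve_left (mul_ne_zero hlc hd)
    linear_combination hode
  field_simp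
  linarith

/-- Comparison principle for equilibrium configurations of repelling points on `(0, ∞)`: a stronger
repulsion from the origin moves all points to the right. -/
theorem lt_of_equilibrium {ι : Type*} [LinearOrder ι] {s : Finset ι} {a b A B : ι → ℝ}
    (ha : StrictMonoOn a s) (hb : StrictMonoOn b s)
    (ha0 : ∀ k ∈ s, 0 < a k) (hb0 : ∀ k ∈ s, 0 < b k)
    (haA : ∀ k ∈ s, ∑ j ∈ s.erase k, 2 / (a k - a j) = 1 - A k / a k)
    (hbB : ∀ k ∈ s, ∑ j ∈ s.erase k, 2 / (b k - b j) = 1 - B k / b k)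
    (hAB : ∀ k ∈ s, A k < B k) : ∀ k ∈ s, a k < b k := by
  intro i hi
  obtain ⟨k, hk, hmax⟩ := s.exists_max_image (fun j => a j / b j) ⟨i, hi⟩
  have hak := ha0 k hk
  have hbk := hb0 k hk
  suffices h : a k / b k < 1 by
    exact (div_lt_one (hb0 i hi)).1 ((hmax i hi).trans_lt h)
  by_contra! hρ
  set ρ := a k / b k with hρ_def
  have hρ0 : 0 < ρ := by positivity
  have hak_eq : a k = ρ * b k := by rw [hρ_def]; field_simp
  have hle : ∑ j ∈ s.erase k, 2 / (a k - a j) ≤ ∑ j ∈ s.erase k, ρ⁻¹ * (2 / (b k - b j)) := by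
    refine Finset.sum_le_sum fun j hj => ?_
    rw [Finset.mem_erase] at hj
    have haj : a j ≤ ρ * b j := (div_le_iff₀ (hb0 j hj.2)).1 (hmax j hj.2)
    have hsub : ρ * (b k - b j) ≤ a k - a j := by linarith
    have hrw : ρ⁻¹ * (2 / (b k - b j)) = 2 / (ρ * (b k - b j)) := by
      rw [div_mul_eq_div_div, div_right_comm, div_eq_inv_mul _ ρ]
    rw [hrw, div_eq_mul_one_div, div_eq_mul_one_div 2 (ρ * _)]
    refine mul_le_mul_of_nonneg_left ?_ zero_le_two
    rcases lt_or_gt_of_ne hj.1 with hjk | hjk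
    · exact one_div_le_one_div_of_le (mul_pos hρ0 (sub_pos.2 (hb hj.2 hk hjk))) hsub
    · exact one_div_le_one_div_of_neg_of_le (sub_neg.2 (ha hk hj.2 hjk)) hsub
  rw [← Finset.mul_sum, haA k hk, hbB k hk, hak_eq] at hle
  have hinv : ρ⁻¹ ≤ 1 := inv_le_one_of_one_le₀ hρ
  have hlt : A k / (ρ * b k) < B k / (ρ * b k) :=
    div_lt_div_of_pos_right (hAB k hk) (by positivity)
  have hB : ρ⁻¹ * (1 - B k / b k) = ρ⁻¹ - B k / (ρ * b k) := by field_simp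
  linarith

theorem zeros_chain_inequalities (α t : ℝ) (hα : α > -1) (ht0 : 0 < t) (ht2 : t < 2)
    (n : ℕ) (hn : 2 ≤ n) (x y τ X : ℕ → ℝ)
    (hx0 : 0 < x 1)
    (hxmono : StrictMonoOn x (Set.Icc 1 n))
    (hxzero : ∀ k ∈ Set.Icc 1 n, laguerre α n (x k) = 0)
    (hy0 : 0 < y 1)
    (hymono : StrictMonoOn y (Set.Icc 1 (n - 1)))
    (hyzero : ∀ k ∈ Set.Icc 1 (n - 1), laguerre α (n - 1) (y k) = 0)
    (hτ0 : 0 < τ 1)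
    (hτmono : StrictMonoOn τ (Set.Icc 1 (n - 1)))
    (hτzero : ∀ k ∈ Set.Icc 1 (n - 1), laguerre (α + t) (n - 1) (τ k) = 0)
    (hX0 : 0 < X 1)
    (hXmono : StrictMonoOn X (Set.Icc 1 (n - 1)))
    (hXzero : ∀ k ∈ Set.Icc 1 (n - 1), laguerre (α + 2) (n - 1) (X k) = 0) :
    ∀ k, 1 ≤ k → k ≤ n - 1 →
      x k < y k ∧ y k < τ k ∧ τ k < X k ∧ X k < x (k + 1) := by
  have pos_of (v : ℕ → ℝ) (m : ℕ) (h0 : 0 < v 1) (hv : StrictMonoOn v (Set.Icc 1 m)) :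
      ∀ k ∈ Finset.Icc 1 m, 0 < v k := fun k hk => by
    rw [Finset.mem_Icc] at hk
    exact h0.trans_le (hv.monotoneOn ⟨le_rfl, hk.1.trans hk.2⟩ hk hk.1)
  have equilibrium (v : ℕ → ℝ) (m : ℕ) (β : ℝ) (h0 : 0 < v 1)
      (hv : StrictMonoOn v (Set.Icc 1 m)) (hz : ∀ k ∈ Set.Icc 1 m, laguerre β m (v k) = 0) :
      ∀ k ∈ Finset.Icc 1 m,
        ∑ j ∈ (Finset.Icc 1 m).erase k, 2 / (v k - v j) = 1 - (β + 1) / v k := fun k hk =>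
    laguerre_zeros_equilibrium (by simp) (by simpa using hv.injOn)
      (fun i hi => hz i (by simpa using hi)) hk (pos_of v m h0 hv k hk).ne'
  obtain ⟨m, rfl⟩ : ∃ m, n = m + 1 := ⟨n - 1, by omega⟩
  simp only [Nat.add_sub_cancel] at *
  have hx_pos := pos_of x _ hx0 hxmono
  have hy_pos := pos_of y _ hy0 hymono
  have hτ_pos := pos_of τ _ hτ0 hτmono
  have hX_pos := pos_of X _ hX0 hXmono
  have hx_eq := equilibrium x _ _ hx0 hxmono hxzero
  have hy_eq := equilibrium y _ _ hy0 hymono hyzero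
  have hτ_eq := equilibrium τ _ _ hτ0 hτmono hτzero
  have hX_eq := equilibrium X _ _ hX0 hXmono hXzero
  rw [← Finset.coe_Icc] at hymono hτmono hXmono
  have hxy : ∀ k ∈ Finset.Icc 1 m, x k < y k := by
    refine lt_of_equilibrium (A := fun k => α + 1 - 2 * x k / (x (m + 1) - x k))
      (hxmono.mono ?_) hymono (fun k hk => hx_pos k ?_) hy_pos (fun k hk => ?_) hy_eq
      fun k hk => ?_
    · rw [Finset.coe_Icc]
      exact Set.Icc_subset_Icc_right m.le_succ
    · rw [Finset.mem_Icc] at hk ⊢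
      omega
    all_goals
      have hk' : k ∈ Finset.Icc 1 (m + 1) := by
        rw [Finset.mem_Icc] at hk ⊢
        omega
      have hlt : 0 < x (m + 1) - x k := by
        rw [Finset.mem_Icc] at hk hk'
        exact sub_pos.2 (hxmono hk' ⟨by omega, le_rfl⟩ (by omega))
      have hxk := hx_pos k hk'
    · have h := hx_eq k hk'
      have hset : (Finset.Icc 1 (m + 1)).erase k =
          insert (m + 1) ((Finset.Icc 1 m).erase k) := by
        ext j
        simp only [Finset.mem_erase, Finset.mem_insert, Finset.mem_Icc] at hk ⊢
        omega
      rw [hset, Finset.sum_insert (by simp)] at h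
      have hneg : 2 / (x k - x (m + 1)) = -(2 / (x (m + 1) - x k)) := by
        rw [← neg_sub (x (m + 1)), div_neg]
      rw [eq_sub_of_add_eq' h, hneg]
      field_simp
      ring
    · have : 0 < 2 * x k / (x (m + 1) - x k) := by positivity
      linarith
  have hyτ : ∀ k ∈ Finset.Icc 1 m, y k < τ k :=
    lt_of_equilibrium hymono hτmono hy_pos hτ_pos hy_eq hτ_eq fun k _ => by linarith
  have hτX : ∀ k ∈ Finset.Icc 1 m, τ k < X k :=
    lt_of_equilibrium hτmono hXmono hτ_pos hX_pos hτ_eq hX_eq fun k _ => by linarith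
  have hXx : ∀ k ∈ Finset.Icc 1 m, X k < x (k + 1) := by
    refine lt_of_equilibrium (b := fun k => x (k + 1))
      (B := fun k => α + 1 + 2 * x (k + 1) / (x (k + 1) - x 1))
      hXmono (fun i hi j hj hij => ?_) hX_pos (fun k hk => hx_pos (k + 1) ?_) hX_eq
      (fun k hk => ?_) fun k hk => ?_
    · rw [Finset.coe_Icc] at hi hj
      exact hxmono ⟨by omega, by have := hi.2; omega⟩ ⟨by omega, by have := hj.2; omega⟩
        (by omega)
    · rw [Finset.mem_Icc] at hk ⊢
      omega
    all_goals
      have hk' : k + 1 ∈ Finset.Icc 1 (m + 1) := by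
        rw [Finset.mem_Icc] at hk ⊢
        omega
      have hlt : 0 < x (k + 1) - x 1 := by
        rw [Finset.mem_Icc] at hk hk'
        exact sub_pos.2 (hxmono ⟨le_rfl, by omega⟩ hk' (by omega))
      have hxk := hx_pos (k + 1) hk'
    · have h := hx_eq (k + 1) hk'
      have hset : (Finset.Icc 1 (m + 1)).erase (k + 1) =
          insert 1 (((Finset.Icc 1 m).erase k).image (· + 1)) := by
        ext j
        simp only [Finset.mem_erase, Finset.mem_insert, Finset.mem_image, Finset.mem_Icc] at hk ⊢
        constructor
        · intro hj
          by_cases h1 : j = 1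
          · exact Or.inl h1
          · exact Or.inr ⟨j - 1, by omega, by omega⟩
        · rintro (rfl | ⟨i, hi, rfl⟩) <;> omega
      rw [hset, Finset.sum_insert (by simp), Finset.sum_image (by simp)] at h
      rw [eq_sub_of_add_eq' h]
      field_simp
      ring
    · have : 1 < x (k + 1) / (x (k + 1) - x 1) := (one_lt_div hlt).2 (by linarith)
      have hmul : 2 * x (k + 1) / (x (k + 1) - x 1) = 2 * (x (k + 1) / (x (k + 1) - x 1)) :=
        mul_div_assoc _ _ _
      linarith
  intro k hk1 hkm
  have hk : k ∈ Finset.Icc 1 m := Finset.mem_Icc.2 ⟨hk1, hkm⟩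
  exact ⟨hxy k hk, hyτ k hk, hτX k hk, hXx k hk⟩
end
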